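/- arXiv:1711.04606 — 2 statements merged into one kernel-verified Lean document; each statement's English description precedes it below -/
import Mathlib

section
/- Let P be a finite type (the set of pixels), A ⊆ P a region, B ⊆ A a subset of A (the 'boundary' pixels), and f : (P → Bool) → ℝ. Suppose the number of boundary configurations b : B → Bool for which there exists x : P → Bool with f(x) ≠ 0 and x agreeing with b on B is at most p, and suppose rank F_{A,b} ≤ r for every b : B → Bool. Then rank F_A ≤ p · r. (This is Corollary 1 of the paper: under the generalized Assumptions 1 and 2, the unfolding of f along any region A has rank polynomial in the size of its boundary.) -/
/-! The row of `F_A` indexed by `u` is the row of `F_{A,b}` indexed by `u` restricted to `A \ B`,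
where `b` is the restriction of `u` to `B` (`glueBnd_restrict`). If `b` is not valid, this row
vanishes. Hence the row space of `F_A` lies in the sum, over the valid `b`, of the row spaces of
the `F_{A,b}`: at most `p` subspaces, each of dimension at most `r`
(`finrank_finset_sup_le_card_mul`). -/

/-- Combine a configuration of the region `A` with a configuration of its complement into a
full configuration of the pixel set `P`. -/
def glue {P : Type*} [DecidableEq P] (A : Finset P) (u : {q // q ∈ A} → Bool)
    (v : {q // q ∉ A} → Bool) : P → Bool := fun q =>
  if h : q ∈ A then u ⟨q, h⟩ else v ⟨q, h⟩

/-- The unfolding matrix `F_A` of `f` along the region `A` (rows: configurations of `A`;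
columns: configurations of the complement of `A`; entry: `f` of the assembled image). -/
def regionUnfold {P : Type*} [Fintype P] [DecidableEq P] (f : (P → Bool) → ℝ)
    (A : Finset P) : Matrix ({q // q ∈ A} → Bool) ({q // q ∉ A} → Bool) ℝ :=
  Matrix.of fun u v => f (glue A u v)

/-- Combine a boundary configuration `b` on `B`, a configuration of `A \ B`, and a
configuration of the complement of `A` into a full configuration of `P`. -/
def glueBnd {P : Type*} [DecidableEq P] (A B : Finset P) (b : {q // q ∈ B} → Bool)
    (u : {q // q ∈ A \ B} → Bool) (v : {q // q ∉ A} → Bool) : P → Bool := fun q =>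
  if h : q ∈ B then b ⟨q, h⟩
  else if h2 : q ∈ A then u ⟨q, Finset.mem_sdiff.mpr ⟨h2, h⟩⟩
  else v ⟨q, h2⟩

/-- The fixed-boundary unfolding matrix `F_{A,b}` (rows: configurations of `A \ B`;
columns: configurations of the complement of `A`; entry: `f` of the image equal to `b` on
`B` and otherwise given by the row and column indices). -/
def regionBndUnfold {P : Type*} [Fintype P] [DecidableEq P] (f : (P → Bool) → ℝ)
    (A B : Finset P) (b : {q // q ∈ B} → Bool) :
    Matrix ({q // q ∈ A \ B} → Bool) ({q // q ∉ A} → Bool) ℝ :=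
  Matrix.of fun u v => f (glueBnd A B b u v)

/-- Subadditivity of dimension over finite sums of subspaces, with a uniform bound `r` on the
dimensions of the summands. -/
lemma finrank_finset_sup_le_card_mul {ι V : Type*} [AddCommGroup V] [Module ℝ V]
    [FiniteDimensional ℝ V] (s : Finset ι) (W : ι → Submodule ℝ V) (r : ℕ)
    (h : ∀ i, Module.finrank ℝ (W i) ≤ r) :
    Module.finrank ℝ (s.sup W : Submodule ℝ V) ≤ s.card * r := by
  classical
  induction s using Finset.induction_on with
  | empty => simp
  | insert a s ha ih =>
    rw [Finset.sup_insert, Finset.card_insert_of_notMem ha]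
    have h1 := Submodule.finrank_add_le_finrank_add_finrank (W a) (s.sup W)
    have h2 := h a
    linarith

lemma glueBnd_restrict {P : Type*} [DecidableEq P] {A B : Finset P} (hBA : B ⊆ A)
    (u : {q // q ∈ A} → Bool) (v : {q // q ∉ A} → Bool) :
    glueBnd A B (fun q => u ⟨q, hBA q.2⟩)
      (fun q => u ⟨q, (Finset.mem_sdiff.mp q.2).1⟩) v = glue A u v := by
  funext q
  by_cases hB : q ∈ B
  · simp [glueBnd, glue, hB, hBA hB]
  · simp [glueBnd, glue, hB]

open Classical in
/-- Corollary 1 of the paper. If the number of valid boundary configurations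
`b : B → Bool` (those agreeing with some `x` with `f x ≠ 0`) is at most `p`, and
`rank F_{A,b} ≤ r` for every boundary configuration `b`, then `rank F_A ≤ p * r`. -/
theorem rank_regionUnfold_le_of_card_valid_le_of_rank_regionBndUnfold_le {P : Type*}
    [Fintype P] [DecidableEq P] (A B : Finset P) (hBA : B ⊆ A) (f : (P → Bool) → ℝ)
    (p r : ℕ)
    (hp : (Finset.univ.filter (fun b : {q // q ∈ B} → Bool =>
        ∃ x : P → Bool, f x ≠ 0 ∧ ∀ (q : P) (h : q ∈ B), x q = b ⟨q, h⟩)).card ≤ p)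
    (hr : ∀ b : {q // q ∈ B} → Bool, (regionBndUnfold f A B b).rank ≤ r) :
    (regionUnfold f A).rank ≤ p * r := by
  let W := fun b : {q // q ∈ B} → Bool =>
    Submodule.span ℝ (Set.range (regionBndUnfold f A B b).row)
  have hW : ∀ b, Module.finrank ℝ (W b) ≤ r := fun b => by
    rw [← Matrix.rank_eq_finrank_span_row]
    exact hr b
  rw [Matrix.rank_eq_finrank_span_row]
  refine le_trans (Submodule.finrank_mono ?_)
    ((finrank_finset_sup_le_card_mul _ W r hW).trans (Nat.mul_le_mul_right r hp))
  rw [Submodule.span_le]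
  rintro _ ⟨u, rfl⟩
  let b : {q // q ∈ B} → Bool := fun q => u ⟨q, hBA q.2⟩
  by_cases hb : ∃ x : P → Bool, f x ≠ 0 ∧ ∀ (q : P) (h : q ∈ B), x q = b ⟨q, h⟩
  · refine Finset.le_sup (f := W) (Finset.mem_filter.mpr ⟨Finset.mem_univ b, hb⟩) ?_
    refine Submodule.subset_span ⟨fun q => u ⟨q, (Finset.mem_sdiff.mp q.2).1⟩, ?_⟩
    funext v
    exact congrArg f (glueBnd_restrict hBA u v)
  -- Every image extending `u` agrees with the invalid `b` on `B`, so the row is zero.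
  · have hzero : (regionUnfold f A).row u = 0 := by
      funext v
      by_contra hne
      exact hb ⟨glue A u v, hne, fun q h => by simp [glue, hBA h, b]⟩
    rw [hzero]
    exact Submodule.zero_mem _
end

section
/- Let n = 2^m and order the n² pixels of an n×n image by the Morton (Z-order) bijection z : Fin 4^m → Fin n × Fin n obtained by bit interleaving, so that for every dyadic interval I of {0,…,4^m − 1} the image z(I) is a dyadic rectangle of pixels (a square at odd tree levels and a 2:1 rectangle at even tree levels), namely the support S of a node of the complete binary tree of Section 4 of the paper. Let f : ((Fin n × Fin n) → Bool) → ℝ be not identically zero, and suppose that for every level 1 ≤ i ≤ 2m and every node support S at level i one has rank F_S ≤ R_i for a given sequence of natural numbers R_i. Then f admits an exact hierarchical Tucker (tree tensor network) representation over the pixels in Z-order in which the number of channels of every node at level i is at most R_i: there exist functions φ_{S,α} : ((S → Bool) → ℝ) for each node support S and each α below the channel number of S, and coefficient tensors at each internal node, such that each internal node's functions are the prescribed bilinear combinations of its children's functions and the root function (with one channel) equals f. (This is the content of Theorem 1 of the paper, which combined with Corollary 1 gives channel numbers 2^{O(i)} at layer i.) -/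
/-!
Write `V ℓ j` for the column space of the unfolding of `g = zOrder m f` along the dyadic interval
`I_{ℓ,j}`; its dimension is the rank of the unfolding. At every node below the root the channel
functions form a basis of `V ℓ j`; at the root the only channel function is `g`, the unique
column of the unfolding along the whole line.

Freezing one half of the variables of `I_{ℓ+1,j}` in a column of the unfolding along `I_{ℓ+1,j}`
gives a column of the unfolding along the other half (`colSpace_restrict_left`,
`colSpace_restrict_right`). So a function `h ∈ V (ℓ+1) j`, read as a matrix `H u v` indexed by the
configurations of the two halves, has all its columns in `V ℓ (2j)` and all its rows in
`V ℓ (2j+1)`. Such a matrix is a bilinear combination of spanning families of the two spaces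
(`exists_bilinear_of_mem_span`), which gives the transfer tensors.
-/

/-- Assemble a configuration of all `2^N` variables from a configuration `u` of the dyadic
interval `I_{ℓ,j} = {j·2^ℓ, …, (j+1)·2^ℓ − 1}` (in local coordinates) and a configuration `v`
of the remaining coordinates. -/
def assembleDy (N ℓ j : ℕ) (u : Fin (2 ^ ℓ) → Bool)
    (v : {t : Fin (2 ^ N) // (t : ℕ) < j * 2 ^ ℓ ∨ (j + 1) * 2 ^ ℓ ≤ (t : ℕ)} → Bool) :
    Fin (2 ^ N) → Bool := fun t =>
  if h : j * 2 ^ ℓ ≤ (t : ℕ) ∧ (t : ℕ) < (j + 1) * 2 ^ ℓ then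
    u ⟨(t : ℕ) - j * 2 ^ ℓ, by
      obtain ⟨h1, h2⟩ := h; rw [add_mul, one_mul] at h2; omega⟩
  else v ⟨t, by omega⟩

/-- The unfolding matrix of `g` along the dyadic interval `I_{ℓ,j}` (rows: configurations of
the coordinates in `I_{ℓ,j}`; columns: configurations of the remaining coordinates; entry:
`g` of the assembled configuration). -/
def dyUnfold (N : ℕ) (g : (Fin (2 ^ N) → Bool) → ℝ) (ℓ j : ℕ) :
    Matrix (Fin (2 ^ ℓ) → Bool)
      ({t : Fin (2 ^ N) // (t : ℕ) < j * 2 ^ ℓ ∨ (j + 1) * 2 ^ ℓ ≤ (t : ℕ)} → Bool) ℝ :=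
  Matrix.of fun u v => g (assembleDy N ℓ j u v)

/-- Bit interleaving: `interleave r c` is the natural number whose binary digits at the even
positions are those of `c` and at the odd positions are those of `r`; it is the Morton
(Z-order) index of the pixel in row `r` and column `c`. -/
def interleave (r c : ℕ) : ℕ :=
  ∑ t ∈ Finset.range (r + c + 1), (c / 2 ^ t % 2 + 2 * (r / 2 ^ t % 2)) * 4 ^ t

/-- A function of the `2^m × 2^m` pixels of an image, rewritten as a function of the `2^(2m)`
pixels listed in Morton (Z-)order: the pixel in row `r` and column `c` is read off at position
`interleave r c` of the Z-ordered line (the `% 2^(2m)` is provably the identity here, since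
`interleave r c < 2^(2m)` for `r, c < 2^m`). -/
def zOrder (m : ℕ) (f : (Fin (2 ^ m) × Fin (2 ^ m) → Bool) → ℝ) :
    (Fin (2 ^ (2 * m)) → Bool) → ℝ := fun line =>
  f fun q => line ⟨interleave (q.1 : ℕ) (q.2 : ℕ) % 2 ^ (2 * m), Nat.mod_lt _ (by positivity)⟩

/-- A finite matrix `H` whose columns lie in the span of `b` and whose rows lie in the span of `d`
is a combination of the products `b β ⊗ d γ`. -/
lemma exists_bilinear_of_mem_span {X Y : Type*} [Fintype X] {p q : ℕ}
    (b : Fin p → X → ℝ) (d : Fin q → Y → ℝ) (H : X → Y → ℝ)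
    (hb : ∀ y, (fun x => H x y) ∈ Submodule.span ℝ (Set.range b))
    (hd : ∀ x, H x ∈ Submodule.span ℝ (Set.range d)) :
    ∃ c : Fin p → Fin q → ℝ, ∀ x y, H x y = ∑ β, ∑ γ, c β γ * b β x * d γ y := by
  classical
  -- `s` reads off, linearly, coefficients with respect to `b` of any function in the span of `b`.
  obtain ⟨s₀, hs₀⟩ := (Fintype.linearCombination ℝ b).rangeRestrict.exists_rightInverse_of_surjective
    (LinearMap.range_rangeRestrict _)
  obtain ⟨s, hs⟩ := LinearMap.exists_extend s₀
  have key : ∀ u ∈ Submodule.span ℝ (Set.range b), u = ∑ β, s u β • b β := by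
    intro u hu
    rw [← Fintype.range_linearCombination ℝ b] at hu
    have h1 := LinearMap.congr_fun hs₀ ⟨u, hu⟩
    have h2 := LinearMap.congr_fun hs ⟨u, hu⟩
    have h3 := congrArg Subtype.val h1
    simp only [LinearMap.comp_apply, Submodule.subtype_apply] at h2
    simp only [LinearMap.comp_apply, LinearMap.id_apply, ← h2, LinearMap.codRestrict_apply,
      LinearMap.rangeRestrict, Fintype.linearCombination_apply] at h3
    exact h3.symm
  -- The coefficients of the columns of `H` are fixed linear combinations of its rows.
  have hcoef : ∀ β, (fun y => s (fun x => H x y) β) ∈ Submodule.span ℝ (Set.range d) := by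
    intro β
    have : (fun y => s (fun x => H x y) β) = ∑ x, s (Pi.single x 1) β • H x := by
      funext y
      have h1 : (fun x => H x y) = ∑ x, H x y • (Pi.single x (1 : ℝ) : X → ℝ) := by
        funext x'
        simp [Finset.sum_apply, Pi.single_apply]
      rw [h1]
      simp [Finset.sum_apply, map_sum, mul_comm]
    rw [this]
    exact Submodule.sum_mem _ fun x _ => Submodule.smul_mem _ _ (hd x)
  have hc : ∀ β, ∃ c : Fin q → ℝ, ∑ γ, c γ • d γ = fun y => s (fun x => H x y) β :=
    fun β => (Submodule.mem_span_range_iff_exists_fun ℝ).1 (hcoef β)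
  choose c hc using hc
  refine ⟨c, fun x y => ?_⟩
  have h1 := congrFun (key _ (hb y)) x
  simp only [Finset.sum_apply, Pi.smul_apply, smul_eq_mul] at h1
  rw [h1]
  refine Finset.sum_congr rfl fun β _ => ?_
  have h2 := congrFun (hc β) y
  simp only [Finset.sum_apply, Pi.smul_apply, smul_eq_mul] at h2
  rw [← h2, Finset.sum_mul]
  exact Finset.sum_congr rfl fun γ _ => by ring

/-- The column space of the unfolding of `g` along the dyadic interval `I_{ℓ,j}`. -/
def colSpace (N : ℕ) (g : (Fin (2 ^ N) → Bool) → ℝ) (ℓ j : ℕ) :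
    Submodule ℝ ((Fin (2 ^ ℓ) → Bool) → ℝ) :=
  Submodule.span ℝ (Set.range (dyUnfold N g ℓ j).col)

/-- Concatenation of configurations of the two halves of a dyadic interval. -/
def joinCfg (ℓ : ℕ) (u v : Fin (2 ^ ℓ) → Bool) : Fin (2 ^ (ℓ + 1)) → Bool := fun t =>
  if h : (t : ℕ) < 2 ^ ℓ then u ⟨t, h⟩
  else v ⟨(t : ℕ) - 2 ^ ℓ, by have := t.isLt; have := pow_succ 2 ℓ; omega⟩

/-- Replacing the variables of `I_{ℓ,j}` in a fixed configuration `w` of the line gives a column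
of the unfolding along `I_{ℓ,j}`. -/
lemma mem_colSpace_of_eq (N : ℕ) (g : (Fin (2 ^ N) → Bool) → ℝ) (ℓ j : ℕ)
    (w : Fin (2 ^ N) → Bool) (F : (Fin (2 ^ ℓ) → Bool) → Fin (2 ^ N) → Bool)
    (hF : ∀ u, F u = assembleDy N ℓ j u (fun t => w t)) :
    (fun u => g (F u)) ∈ colSpace N g ℓ j := by
  refine Submodule.subset_span ⟨fun t => w t, ?_⟩
  funext u
  simp [dyUnfold, Matrix.col, hF]

lemma colSpace_restrict_left (N : ℕ) (g : (Fin (2 ^ N) → Bool) → ℝ) (ℓ j : ℕ)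
    (h : (Fin (2 ^ (ℓ + 1)) → Bool) → ℝ) (hh : h ∈ colSpace N g (ℓ + 1) j)
    (y : Fin (2 ^ ℓ) → Bool) :
    (fun u => h (joinCfg ℓ u y)) ∈ colSpace N g ℓ (2 * j) := by
  have hle : colSpace N g (ℓ + 1) j ≤ (colSpace N g ℓ (2 * j)).comap
      (LinearMap.funLeft ℝ ℝ fun u => joinCfg ℓ u y) := by
    refine Submodule.span_le.2 ?_
    rintro _ ⟨v, rfl⟩
    refine mem_colSpace_of_eq N g ℓ (2 * j)
      (assembleDy N (ℓ + 1) j (joinCfg ℓ (fun _ => false) y) v)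
      (fun u => assembleDy N (ℓ + 1) j (joinCfg ℓ u y) v) fun u => ?_
    funext t
    have e1 : j * 2 ^ (ℓ + 1) = 2 * (j * 2 ^ ℓ) := by ring
    have e2 : (j + 1) * 2 ^ (ℓ + 1) = 2 * (j * 2 ^ ℓ) + 2 * 2 ^ ℓ := by ring
    have e3 : 2 * j * 2 ^ ℓ = 2 * (j * 2 ^ ℓ) := by ring
    have e4 : (2 * j + 1) * 2 ^ ℓ = 2 * (j * 2 ^ ℓ) + 2 ^ ℓ := by ring
    simp only [assembleDy, joinCfg, e1, e2, e3, e4]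
    split_ifs <;> first | rfl | omega
  exact hle hh

lemma colSpace_restrict_right (N : ℕ) (g : (Fin (2 ^ N) → Bool) → ℝ) (ℓ j : ℕ)
    (h : (Fin (2 ^ (ℓ + 1)) → Bool) → ℝ) (hh : h ∈ colSpace N g (ℓ + 1) j)
    (x : Fin (2 ^ ℓ) → Bool) :
    (fun u => h (joinCfg ℓ x u)) ∈ colSpace N g ℓ (2 * j + 1) := by
  have hle : colSpace N g (ℓ + 1) j ≤ (colSpace N g ℓ (2 * j + 1)).comap
      (LinearMap.funLeft ℝ ℝ fun u => joinCfg ℓ x u) := by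
    refine Submodule.span_le.2 ?_
    rintro _ ⟨v, rfl⟩
    refine mem_colSpace_of_eq N g ℓ (2 * j + 1)
      (assembleDy N (ℓ + 1) j (joinCfg ℓ x (fun _ => false)) v)
      (fun u => assembleDy N (ℓ + 1) j (joinCfg ℓ x u) v) fun u => ?_
    funext t
    have e1 : j * 2 ^ (ℓ + 1) = 2 * (j * 2 ^ ℓ) := by ring
    have e2 : (j + 1) * 2 ^ (ℓ + 1) = 2 * (j * 2 ^ ℓ) + 2 * 2 ^ ℓ := by ring
    have e3 : (2 * j + 1) * 2 ^ ℓ = 2 * (j * 2 ^ ℓ) + 2 ^ ℓ := by ring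
    have e4 : (2 * j + 1 + 1) * 2 ^ ℓ = 2 * (j * 2 ^ ℓ) + 2 * 2 ^ ℓ := by ring
    simp only [assembleDy, joinCfg, e1, e2, e3, e4]
    split_ifs <;> first | rfl | omega | (congr 2; omega)
  exact hle hh

/-- The channel functions of the node `(i, j)`: a basis of the column space below the root layer,
and a single column of the unfolding at the root layer `N + 1`. -/
lemma exists_channels (N : ℕ) (g : (Fin (2 ^ N) → Bool) → ℝ) (i j : ℕ) :
    ∃ (n : ℕ) (b : Fin n → (Fin (2 ^ (i - 1)) → Bool) → ℝ),
      (∀ α, b α ∈ colSpace N g (i - 1) j) ∧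
      (i ≠ N + 1 → n = (dyUnfold N g (i - 1) j).rank ∧
        colSpace N g (i - 1) j ≤ Submodule.span ℝ (Set.range b)) ∧
      (i = N + 1 → n = 1 ∧
        ∀ α, b α = fun u => g (assembleDy N (i - 1) j u fun _ => false)) := by
  by_cases hi : i = N + 1
  · refine ⟨1, fun _ u => g (assembleDy N (i - 1) j u fun _ => false), fun _ => ?_,
      fun h => absurd hi h, fun _ => ⟨rfl, fun _ => rfl⟩⟩
    exact mem_colSpace_of_eq N g (i - 1) j (fun _ => false) _ fun u => rfl
  · let B := Module.finBasis ℝ (colSpace N g (i - 1) j)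
    refine ⟨_, fun α => (B α : (Fin (2 ^ (i - 1)) → Bool) → ℝ), fun α => (B α).2,
      fun _ => ⟨(Matrix.rank_eq_finrank_span_cols _).symm, ?_⟩, fun h => absurd h hi⟩
    have h1 := congrArg (Submodule.map (colSpace N g (i - 1) j).subtype) B.span_eq
    rw [Submodule.map_span, ← Set.range_comp, Submodule.map_top, Submodule.range_subtype] at h1
    exact h1.ge

/-- Theorem 1 of the paper. Let `n = 2^m` and list the `n²` pixels in
Morton (Z-)order, so that the support of the node `(i, j)` of the complete binary tree
(layer `i` from the leaves, `1 ≤ i ≤ 2m+1`) is the image of the dyadic interval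
`I_{i-1,j} = {j·2^{i-1}, …, (j+1)·2^{i-1} − 1}`, a dyadic rectangle of pixels. If `f` is not
identically zero and the unfolding of `f` along every node support at layer `i` (`1 ≤ i ≤ 2m`)
has rank at most `R i`, then `f` admits an exact hierarchical Tucker (tree tensor network)
representation over the pixels in Z-order in which every node at layer `i` has at most `R i`
channels, the root has one channel, each internal node's functions are the prescribed
bilinear combinations of those of its two children, and the root function is `f` (in
Z-order). -/
theorem exists_hierarchicalTucker_of_rank_le (m : ℕ)
    (f : (Fin (2 ^ m) × Fin (2 ^ m) → Bool) → ℝ) (hf : f ≠ 0) (R : ℕ → ℕ)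
    (hR : ∀ i, 1 ≤ i → i ≤ 2 * m → ∀ j, j < 2 ^ (2 * m - (i - 1)) →
      (dyUnfold (2 * m) (zOrder m f) (i - 1) j).rank ≤ R i) :
    ∃ (L : ℕ → ℕ → ℕ)
      (φ : (i j : ℕ) → Fin (L i j) → ((Fin (2 ^ (i - 1)) → Bool) → ℝ))
      (c : (i j : ℕ) → Fin (L (i + 1) j) → Fin (L i (2 * j)) → Fin (L i (2 * j + 1)) → ℝ),
      (∀ i, 1 ≤ i → i ≤ 2 * m → ∀ j, j < 2 ^ (2 * m - (i - 1)) → L i j ≤ R i) ∧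
      L (2 * m + 1) 0 = 1 ∧
      (∀ (i j : ℕ) (hi : 1 ≤ i) (hi2 : i + 1 ≤ 2 * m + 1)
          (hj : j < 2 ^ (2 * m + 1 - (i + 1)))
          (α : Fin (L (i + 1) j)) (x : Fin (2 ^ i) → Bool),
        φ (i + 1) j α x =
          ∑ β : Fin (L i (2 * j)), ∑ γ : Fin (L i (2 * j + 1)),
            c i j α β γ *
            φ i (2 * j) β (fun t => x ⟨(t : ℕ), by
              have h1 := t.isLt
              have h2 : (2 : ℕ) ^ (i - 1) * 2 = 2 ^ i := by
                rw [← pow_succ, Nat.sub_add_cancel hi]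
              omega⟩) *
            φ i (2 * j + 1) γ (fun t => x ⟨2 ^ (i - 1) + (t : ℕ), by
              have h1 := t.isLt
              have h2 : (2 : ℕ) ^ (i - 1) * 2 = 2 ^ i := by
                rw [← pow_succ, Nat.sub_add_cancel hi]
              omega⟩)) ∧
      (∀ α : Fin (L (2 * m + 1) 0), φ (2 * m + 1) 0 α = zOrder m f) := by
  classical
  choose L φ hmem hlow hroot using exists_channels (2 * m) (zOrder m f)
  have hc : ∀ i j, ∃ c : Fin (L (i + 1) j) → Fin (L i (2 * j)) → Fin (L i (2 * j + 1)) → ℝ,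
      ∀ (hi : 1 ≤ i) (_ : i + 1 ≤ 2 * m + 1) (α : Fin (L (i + 1) j)) (x : Fin (2 ^ i) → Bool),
        φ (i + 1) j α x =
          ∑ β : Fin (L i (2 * j)), ∑ γ : Fin (L i (2 * j + 1)),
            c α β γ *
            φ i (2 * j) β (fun t => x ⟨(t : ℕ), by
              have h1 := t.isLt
              have h2 : (2 : ℕ) ^ (i - 1) * 2 = 2 ^ i := by
                rw [← pow_succ, Nat.sub_add_cancel hi]
              omega⟩) *
            φ i (2 * j + 1) γ (fun t => x ⟨2 ^ (i - 1) + (t : ℕ), by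
              have h1 := t.isLt
              have h2 : (2 : ℕ) ^ (i - 1) * 2 = 2 ^ i := by
                rw [← pow_succ, Nat.sub_add_cancel hi]
              omega⟩) := by
    intro i j
    by_cases h : 1 ≤ i ∧ i + 1 ≤ 2 * m + 1
    swap
    · exact ⟨fun _ _ _ => 0, fun hi hi2 => absurd ⟨hi, hi2⟩ h⟩
    obtain ⟨hi, hi2⟩ := h
    obtain ⟨ℓ, rfl⟩ : ∃ ℓ, i = ℓ + 1 := ⟨i - 1, by omega⟩
    have hne : ℓ + 1 ≠ 2 * m + 1 := by omega
    have hex := fun α => exists_bilinear_of_mem_span (φ (ℓ + 1) (2 * j)) (φ (ℓ + 1) (2 * j + 1))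
      (fun u v => φ (ℓ + 1 + 1) j α (joinCfg ℓ u v))
      (fun y => (hlow (ℓ + 1) (2 * j) hne).2
        (colSpace_restrict_left _ _ ℓ j _ (hmem (ℓ + 1 + 1) j α) y))
      (fun x => (hlow (ℓ + 1) (2 * j + 1) hne).2
        (colSpace_restrict_right _ _ ℓ j _ (hmem (ℓ + 1 + 1) j α) x))
    choose c hc using hex
    refine ⟨c, fun _ _ α x => ?_⟩
    rw [← hc α]
    congr 1
    funext t
    simp only [joinCfg]
    split_ifs with ht
    · rfl
    · congr 1
      apply Fin.ext
      simp only [Nat.add_sub_cancel]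
      omega
  choose c hc using hc
  refine ⟨L, φ, c, fun i hi hi2 j hj => ?_, (hroot _ _ rfl).1,
    fun i j hi hi2 _ α x => hc i j hi hi2 α x, fun α => ?_⟩
  · rw [(hlow i j (by omega)).1]
    exact hR i hi hi2 j hj
  · rw [(hroot _ _ rfl).2 α]
    funext u
    -- The interval `I_{2m,0}` is the whole line, so assembling returns the row configuration.
    congr 1
    funext t
    have ht := t.isLt
    simp [assembleDy]
end
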